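/- arXiv:1301.0138 — 2 statements merged into one kernel-verified Lean document; each statement's English description precedes it below -/
import Mathlib

section
/- For every integer m ≥ 0, the identity R_m(x,y) = −(X_{m+1}(x,y) + X_m(x,y) + x²) holds in ℂ[x,y]. -/
open Polynomial

/-- The Chebyshev-like polynomials `S n ∈ R[X]` defined by `S 0 = 1`, `S 1 = X` and
`S (n+1) = X * S n - S (n-1)` for all `n : ℤ`. -/
noncomputable def S (R : Type*) [CommRing R] : ℤ → R[X]
  | 0 => 1
  | 1 => X
  | (n : ℕ) + 2 => X * S R (n + 1) - S R n
  | -((n : ℕ) + 1) => X * S R (-n) - S R (-n + 1)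
  termination_by n => Int.natAbs n + Int.natAbs (n - 1)

/-- The variable `x` of `ℂ[x,y]`, realized as `MvPolynomial (Fin 2) ℂ`. -/
noncomputable def xP : MvPolynomial (Fin 2) ℂ := MvPolynomial.X 0

/-- The variable `y` of `ℂ[x,y]`. -/
noncomputable def yP : MvPolynomial (Fin 2) ℂ := MvPolynomial.X 1

/-- The polynomials `X_m ∈ ℂ[x,y]` defined by `X_0 = -2`, `X_1 = -x^2 - y` and
`X_{m+1} = y * X_m - X_{m-1} - 2x^2` for all `m : ℤ`. -/
noncomputable def Xp : ℤ → MvPolynomial (Fin 2) ℂ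
  | 0 => -2
  | 1 => -(MvPolynomial.X 0) ^ 2 - MvPolynomial.X 1
  | (m : ℕ) + 2 => MvPolynomial.X 1 * Xp (m + 1) - Xp m - 2 * (MvPolynomial.X 0) ^ 2
  | -((m : ℕ) + 1) => MvPolynomial.X 1 * Xp (-m) - Xp (-m + 1) - 2 * (MvPolynomial.X 0) ^ 2
  termination_by m => Int.natAbs m + Int.natAbs (m - 1)

/-- The polynomial `R_m(x,y) = (y+2) * (S_m(y) - S_{m-1}(y) + x^2 * ∑_{i=0}^{m-1} S_i(y))`. -/
noncomputable def Rp (m : ℕ) : MvPolynomial (Fin 2) ℂ :=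
  (yP + 2) * (aeval yP (S ℂ (m : ℤ)) - aeval yP (S ℂ ((m : ℤ) - 1))
    + xP ^ 2 * ∑ i ∈ Finset.range m, aeval yP (S ℂ (i : ℤ)))

/-!
The difference `X_{m+2} - X_m` no longer sees the constant `-2x²`, so it satisfies the recurrence of
the Chebyshev polynomials `S_m(y)`; comparing the values at `m = 0` and `m = 1`, it is
`-(y+2)(y-2+x²) S_m(y)`. By the recurrence for `S`, this is also `R_m - R_{m+1}`. Both sides of the
identity thus have the same increments, and they agree at `m = 0`.
-/

theorem S_eq_chebyshevS (R : Type*) [CommRing R] (n : ℤ) : S R n = Chebyshev.S R n := by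
  induction n using Chebyshev.induct with
  | zero => rw [S.eq_1, Chebyshev.S_zero]
  | one => rw [S.eq_2, Chebyshev.S_one]
  | add_two k ih ih' =>
    rw [Chebyshev.S_add_two, ← ih, ← ih']
    exact S.eq_3 R k
  | neg_add_one k ih ih' =>
    rw [Chebyshev.S_sub_one, ← ih, ← ih', ← neg_add', ← Int.negSucc_eq]
    exact S.eq_4 R k

theorem eq_of_second_order_recurrence {A : Type*} [AddCommGroup A] {f : A → A} {u v : ℤ → A}
    (hu : ∀ n, u (n + 2) = f (u (n + 1)) - u n) (hv : ∀ n, v (n + 2) = f (v (n + 1)) - v n)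
    (h_zero : u 0 = v 0) (h_one : u 1 = v 1) : u = v := by
  funext n
  induction n using Chebyshev.induct with
  | zero => exact h_zero
  | one => exact h_one
  | add_two k ih ih' => rw [hu, hv, ih, ih']
  | neg_add_one k ih ih' =>
    have hu' := hu (-k - 1)
    have hv' := hv (-k - 1)
    rw [sub_add_cancel, show -(k : ℤ) - 1 + 2 = -k + 1 by ring] at hu' hv'
    rw [ih, ih', hv'] at hu'
    exact (sub_right_injective hu').symm

theorem Xp_zero : Xp 0 = -2 := Xp.eq_1

theorem Xp_one : Xp 1 = -xP ^ 2 - yP := Xp.eq_2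

theorem Xp_add_two (m : ℤ) : Xp (m + 2) = yP * Xp (m + 1) - Xp m - 2 * xP ^ 2 := by
  match m with
  | (k : ℕ) => exact Xp.eq_3 k
  | .negSucc k =>
    have h : Xp (.negSucc k) = yP * Xp (-k) - Xp (-k + 1) - 2 * xP ^ 2 := Xp.eq_4 k
    rw [show Int.negSucc k + 2 = -k + 1 by lia, show Int.negSucc k + 1 = -k by lia]
    linear_combination h

theorem Xp_add_two_sub_Xp (m : ℤ) :
    Xp (m + 2) - Xp m = -((yP + 2) * (yP - 2 + xP ^ 2)) * aeval yP (S ℂ m) := by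
  have Xp_two : Xp 2 = yP * Xp 1 - Xp 0 - 2 * xP ^ 2 := Xp_add_two 0
  have Xp_three : Xp 3 = yP * Xp 2 - Xp 1 - 2 * xP ^ 2 := Xp_add_two 1
  refine congrFun (eq_of_second_order_recurrence (f := (yP * ·))
    (u := fun n ↦ Xp (n + 2) - Xp n)
    (v := fun n ↦ -((yP + 2) * (yP - 2 + xP ^ 2)) * aeval yP (S ℂ n))
    (fun n ↦ ?recurrence_Xp) (fun n ↦ ?recurrence_S) ?at_zero ?at_one) m
  case recurrence_Xp =>
    have h := Xp_add_two (n + 2)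
    rw [add_right_comm n 2 1] at h
    linear_combination h - Xp_add_two n
  case recurrence_S =>
    simp only [S_eq_chebyshevS, Chebyshev.S_add_two, map_sub, map_mul, aeval_X]
    ring
  case at_zero =>
    simp only [S_eq_chebyshevS, Chebyshev.S_zero, map_one, zero_add, Xp_two, Xp_one, Xp_zero]
    ring
  case at_one =>
    simp only [S_eq_chebyshevS, Chebyshev.S_one, aeval_X, Int.reduceAdd, Xp_three, Xp_two, Xp_one,
      Xp_zero]
    ring

theorem Rp_zero : Rp 0 = yP + 2 := by
  simp [Rp, S_eq_chebyshevS]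

theorem Rp_succ_sub_Rp (m : ℕ) :
    Rp (m + 1) - Rp m = (yP + 2) * (yP - 2 + xP ^ 2) * aeval yP (S ℂ m) := by
  have hS : aeval yP (S ℂ (m + 1)) = yP * aeval yP (S ℂ m) - aeval yP (S ℂ (m - 1)) := by
    simp only [S_eq_chebyshevS, Chebyshev.S_add_one, map_sub, map_mul, aeval_X]
  simp only [Rp, Finset.sum_range_succ, Nat.cast_add, Nat.cast_one, add_sub_cancel_right, hS]
  ring

/-- `R_m(x,y) = -(X_{m+1} + X_m + x^2)` for every integer `m ≥ 0`. -/
theorem Rp_eq_Xp (m : ℕ) :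
    Rp m = -(Xp ((m : ℤ) + 1) + Xp (m : ℤ) + xP ^ 2) := by
  induction m with
  | zero =>
    simp only [Nat.cast_zero, zero_add, Rp_zero, Xp_zero, Xp_one]
    ring
  | succ m ih =>
    rw [Nat.cast_succ, add_assoc (m : ℤ) 1 1, one_add_one_eq_two]
    linear_combination ih + Rp_succ_sub_Rp m + Xp_add_two_sub_Xp m
end

section
/- For every integer m ≥ 1, the identity −X_m(x,y)² − x²·X_m(x,y) − 2x² + 2 = y − (y+2)·\tilde{R}_m(x,y)·\tilde{R}_{m−1}(x,y) holds in ℂ[x,y]. -/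
open Polynomial

/-- The polynomial `R̃_m(x,y) = S_m(y) - S_{m-1}(y) + x^2 * ∑_{i=0}^{m-1} S_i(y)`. -/
noncomputable def Rt (m : ℕ) : MvPolynomial (Fin 2) ℂ :=
  aeval yP (S ℂ (m : ℤ)) - aeval yP (S ℂ ((m : ℤ) - 1))
    + xP ^ 2 * ∑ i ∈ Finset.range m, aeval yP (S ℂ (i : ℤ))

/-!
If `r (n + 2) + r n = y * r (n + 1) + c`, then `r (n + 2)` and `r n` are the two roots of one monic
quadratic whose coefficients depend only on `r (n + 1)`. Hence the symmetric form
`u ^ 2 + v ^ 2 - y * u * v - c * (u + v)` takes the same value at all pairs of consecutive terms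
(Vieta jumping). The sequence `R̃` satisfies such a recurrence with `c = x ^ 2`, and comparing
recurrences gives `X_m = -(R̃_m + R̃_{m-1})`. After this substitution, the identity for `X_m` says
that the form has the value `2 - y - 2 * x ^ 2` at `(R̃_m, R̃_{m-1})`; this is its value at
`(R̃_1, R̃_0)`.
-/

theorem quadratic_invariant_of_recurrence {A : Type*} [CommRing A] {r : ℕ → A} {y c : A}
    (hr : ∀ n, r (n + 2) = y * r (n + 1) - r n + c) (n : ℕ) :
    r (n + 1) ^ 2 + r n ^ 2 - y * r (n + 1) * r n - c * (r (n + 1) + r n) =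
      r 1 ^ 2 + r 0 ^ 2 - y * r 1 * r 0 - c * (r 1 + r 0) := by
  induction n with
  | zero => rfl
  | succ n ih =>
    rw [hr, ← ih]
    ring

section Chebyshev

variable (R : Type*) [CommRing R]

theorem S_natCast_add_two (n : ℕ) : S R (n + 2) = X * S R (n + 1) - S R n :=
  S.eq_3 R n

theorem S_neg_natCast_sub_one (n : ℕ) : S R (-n - 1) = X * S R (-n) - S R (-n + 1) := by
  rw [← neg_add']
  exact S.eq_4 R n

theorem S_eq_chebyshev_S (n : ℤ) : S R n = Chebyshev.S R n := by
  induction n using Chebyshev.induct with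
  | zero => rw [S, Chebyshev.S_zero]
  | one => rw [S, Chebyshev.S_one]
  | add_two n ih₁ ih₀ => rw [S_natCast_add_two, ih₁, ih₀, Chebyshev.S_add_two]
  | neg_add_one n ih₀ ih₁ => rw [S_neg_natCast_sub_one, ih₀, ih₁, Chebyshev.S_sub_one]

theorem X_sub_two_mul_sum_chebyshev_S (n : ℕ) :
    (X - 2) * ∑ i ∈ Finset.range n, Chebyshev.S R i =
      Chebyshev.S R n - Chebyshev.S R (n - 1) - 1 := by
  induction n with
  | zero => simp
  | succ n ih =>
    rw [Finset.sum_range_succ, mul_add, ih]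
    push_cast
    rw [add_sub_cancel_right, Chebyshev.S_add_one]
    ring

theorem sub_two_mul_sum_aeval_S {A : Type*} [CommRing A] [Algebra R A] (a : A) (n : ℕ) :
    (a - 2) * ∑ i ∈ Finset.range n, aeval a (S R i) =
      aeval a (S R n) - aeval a (S R (n - 1)) - 1 := by
  simpa only [S_eq_chebyshev_S, map_mul, map_sub, map_sum, map_one, map_ofNat, aeval_X] using
    congrArg (aeval a) (X_sub_two_mul_sum_chebyshev_S R n)

end Chebyshev

theorem Rt_eq_one_add_mul_sum (n : ℕ) :
    Rt n = 1 + (yP - 2 + xP ^ 2) * ∑ i ∈ Finset.range n, aeval yP (S ℂ i) := by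
  rw [Rt]
  linear_combination -sub_two_mul_sum_aeval_S ℂ yP n

theorem Rt_zero : Rt 0 = 1 := by
  simp [Rt_eq_one_add_mul_sum]

theorem Rt_add_one (n : ℕ) : Rt (n + 1) = Rt n + (yP - 2 + xP ^ 2) * aeval yP (S ℂ n) := by
  rw [Rt_eq_one_add_mul_sum, Rt_eq_one_add_mul_sum, Finset.sum_range_succ]
  ring

theorem Rt_one : Rt 1 = yP - 1 + xP ^ 2 := by
  rw [Rt_add_one 0, Rt_zero, Nat.cast_zero, S_eq_chebyshev_S, Chebyshev.S_zero, map_one]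
  ring

theorem Rt_add_two (n : ℕ) : Rt (n + 2) = yP * Rt (n + 1) - Rt n + xP ^ 2 := by
  have h_diff : aeval yP (S ℂ (n + 1 : ℕ)) - aeval yP (S ℂ n) =
      1 + (yP - 2) * ∑ i ∈ Finset.range (n + 1), aeval yP (S ℂ i) := by
    rw [sub_two_mul_sum_aeval_S, Nat.cast_succ, add_sub_cancel_right]
    ring
  linear_combination Rt_add_one (n + 1) - Rt_add_one n + (yP - 2 + xP ^ 2) * h_diff -
    (yP - 2) * Rt_eq_one_add_mul_sum (n + 1)

theorem Rt_quadratic_invariant (n : ℕ) :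
    Rt (n + 1) ^ 2 + Rt n ^ 2 - yP * Rt (n + 1) * Rt n - xP ^ 2 * (Rt (n + 1) + Rt n) =
      2 - yP - 2 * xP ^ 2 := by
  rw [quadratic_invariant_of_recurrence Rt_add_two, Rt_one, Rt_zero]
  ring

theorem Xp_natCast_add_two (n : ℕ) : Xp (n + 2) = yP * Xp (n + 1) - Xp n - 2 * xP ^ 2 :=
  Xp.eq_3 n

theorem Xp_natCast_add_one (n : ℕ) : Xp (n + 1) = -(Rt (n + 1) + Rt n) := by
  induction n using Nat.twoStepInduction with
  | zero =>
    rw [Nat.cast_zero, zero_add, zero_add, Xp_one, Rt_one, Rt_zero]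
    ring
  | one =>
    have h_Xp : Xp 2 = yP * Xp 1 - Xp 0 - 2 * xP ^ 2 := Xp_natCast_add_two 0
    have h_Rt : Rt 2 = yP * Rt 1 - Rt 0 + xP ^ 2 := Rt_add_two 0
    rw [Nat.cast_one, one_add_one_eq_two, one_add_one_eq_two, h_Xp, h_Rt, Xp_one, Xp_zero,
      Rt_one, Rt_zero]
    ring
  | more n ih₀ ih₁ =>
    have h_Xp := Xp_natCast_add_two (n + 1)
    push_cast at h_Xp ih₁ ⊢
    rw [add_right_comm, h_Xp, ih₁, ih₀, Rt_add_two (n + 1), Rt_add_two n]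
    ring

/-- `-X_m^2 - x^2 X_m - 2x^2 + 2 = y - (y+2) R̃_m R̃_{m-1}` for every integer `m ≥ 1`. -/
theorem neg_Xp_sq (m : ℕ) (hm : 1 ≤ m) :
    -Xp (m : ℤ) ^ 2 - xP ^ 2 * Xp (m : ℤ) - 2 * xP ^ 2 + 2 =
      yP - (yP + 2) * Rt m * Rt (m - 1) := by
  obtain ⟨n, rfl⟩ := Nat.exists_eq_add_of_le' hm
  rw [Nat.add_sub_cancel, Nat.cast_succ, Xp_natCast_add_one]
  linear_combination -Rt_quadratic_invariant n
end
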